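/- arXiv:math/0508255 — 2 statements merged into one kernel-verified Lean document; each statement's English description precedes it below -/
import Mathlib

section
/- Let E be a real Hilbert space, f : E → ℝ a differentiable function with gradient ∇f, and x : ℝ → E a differentiable curve such that x(s) → c₋ as s → −∞ and x(s) → c₊ as s → +∞. Assume that s ↦ ‖x'(s)‖² and s ↦ ‖∇f(x(s))‖² are integrable on ℝ. Then the Bogomol'nyi identity holds: (1/2)∫_ℝ (‖x'(s)‖² + ‖∇f(x(s))‖²) ds = (1/2)∫_ℝ ‖x'(s) + ∇f(x(s))‖² ds + f(c₋) − f(c₊), and likewise (1/2)∫_ℝ (‖x'(s)‖² + ‖∇f(x(s))‖²) ds = (1/2)∫_ℝ ‖x'(s) − ∇f(x(s))‖² ds + f(c₊) − f(c₋). -/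
open MeasureTheory Filter

/-!
Expanding the square, `‖x' ± ∇f(x)‖² = ‖x'‖² + ‖∇f(x)‖² ± 2⟪x', ∇f(x)⟫`, and the cross term is the
derivative of `f ∘ x`, so its integral is the difference of the limits of `f ∘ x` at `±∞`.
-/

section SquareExpansion

variable {𝕜 E α : Type*} [RCLike 𝕜] [NormedAddCommGroup E] [InnerProductSpace 𝕜 E]
  [MeasurableSpace α] {μ : Measure α} {u v : α → E}

theorem norm_inner_le_half_norm_sq_add_norm_sq (y z : E) :
    ‖inner 𝕜 y z‖ ≤ (‖y‖ ^ 2 + ‖z‖ ^ 2) / 2 :=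
  calc
    ‖inner 𝕜 y z‖ ≤ ‖y‖ * ‖z‖ := norm_inner_le_norm y z
    _ ≤ (‖y‖ ^ 2 + ‖z‖ ^ 2) / 2 := by linarith [two_mul_le_add_sq ‖y‖ ‖z‖]

-- Measurability is asked of the pairing: in the application it is the derivative of `f ∘ x`,
-- whereas `∇f ∘ x` has no evident measurability when `∇f` is discontinuous.
theorem integrable_inner_of_integrable_norm_sq_add_norm_sq
    (hmeas : AEStronglyMeasurable (fun a => inner 𝕜 (u a) (v a)) μ)
    (hsq : Integrable (fun a => ‖u a‖ ^ 2 + ‖v a‖ ^ 2) μ) :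
    Integrable (fun a => inner 𝕜 (u a) (v a)) μ :=
  (hsq.div_const 2).mono' hmeas
    (.of_forall fun a => norm_inner_le_half_norm_sq_add_norm_sq (u a) (v a))

theorem integral_norm_add_sq (hsq : Integrable (fun a => ‖u a‖ ^ 2 + ‖v a‖ ^ 2) μ)
    (hinner : Integrable (fun a => inner 𝕜 (u a) (v a)) μ) :
    ∫ a, ‖u a + v a‖ ^ 2 ∂μ =
      ∫ a, (‖u a‖ ^ 2 + ‖v a‖ ^ 2) ∂μ + 2 * RCLike.re (∫ a, inner 𝕜 (u a) (v a) ∂μ) := by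
  rw [← integral_re hinner, ← integral_const_mul, ← integral_add hsq (hinner.re.const_mul 2)]
  congr with a
  rw [norm_add_sq (𝕜 := 𝕜), add_right_comm]

theorem integral_norm_sub_sq (hsq : Integrable (fun a => ‖u a‖ ^ 2 + ‖v a‖ ^ 2) μ)
    (hinner : Integrable (fun a => inner 𝕜 (u a) (v a)) μ) :
    ∫ a, ‖u a - v a‖ ^ 2 ∂μ =
      ∫ a, (‖u a‖ ^ 2 + ‖v a‖ ^ 2) ∂μ - 2 * RCLike.re (∫ a, inner 𝕜 (u a) (v a) ∂μ) := by
  have hadd := integral_norm_add_sq (𝕜 := 𝕜) (u := u) (v := fun a => -v a) (μ := μ)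
    (by simpa only [norm_neg] using hsq) (by simpa only [inner_neg_right] using hinner.fun_neg)
  simpa only [← sub_eq_add_neg, norm_neg, inner_neg_right, integral_neg, map_neg, mul_neg]
    using hadd

end SquareExpansion

theorem stronglyMeasurable_of_hasDerivAt {𝕜 F : Type*} [NontriviallyNormedField 𝕜]
    [LocallyCompactSpace 𝕜] [MeasurableSpace 𝕜] [OpensMeasurableSpace 𝕜]
    [NormedAddCommGroup F] [NormedSpace 𝕜 F] [CompleteSpace F] [SecondCountableTopologyEither 𝕜 F]
    {φ φ' : 𝕜 → F} (hφ : ∀ s, HasDerivAt φ (φ' s) s) : StronglyMeasurable φ' :=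
  (funext fun s => (hφ s).deriv : deriv φ = φ') ▸ stronglyMeasurable_deriv φ

theorem hasDerivAt_comp_of_hasFDerivAt_innerSL {E : Type*} [NormedAddCommGroup E]
    [InnerProductSpace ℝ E] {f : E → ℝ} {x : ℝ → E} {g v : E} {s : ℝ}
    (hf : HasFDerivAt f (innerSL ℝ g) (x s)) (hx : HasDerivAt x v s) :
    HasDerivAt (f ∘ x) (inner ℝ v g) s := by
  simpa only [innerSL_apply_apply, real_inner_comm] using hf.comp_hasDerivAt s hx

-- Without completeness, `HasGradientAt` is unavailable; `innerSL` expresses `df(p)h = ⟪∇f(p), h⟫`.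
theorem bogomolnyi_identity_general {E : Type*} [NormedAddCommGroup E] [InnerProductSpace ℝ E]
    {f : E → ℝ} {gradf : E → E} {x x' : ℝ → E} {a b : ℝ}
    (hf : ∀ s, HasFDerivAt f (innerSL ℝ (gradf (x s))) (x s))
    (hx : ∀ s, HasDerivAt x (x' s) s)
    (ha : Tendsto (f ∘ x) atBot (nhds a)) (hb : Tendsto (f ∘ x) atTop (nhds b))
    (henergy : Integrable fun s => ‖x' s‖ ^ 2 + ‖gradf (x s)‖ ^ 2) :
    ((1 / 2 : ℝ) * ∫ s, (‖x' s‖ ^ 2 + ‖gradf (x s)‖ ^ 2) =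
      (1 / 2 : ℝ) * (∫ s, ‖x' s + gradf (x s)‖ ^ 2) + (a - b)) ∧
    ((1 / 2 : ℝ) * ∫ s, (‖x' s‖ ^ 2 + ‖gradf (x s)‖ ^ 2) =
      (1 / 2 : ℝ) * (∫ s, ‖x' s - gradf (x s)‖ ^ 2) + (b - a)) := by
  have hderiv : ∀ s, HasDerivAt (f ∘ x) (inner ℝ (x' s) (gradf (x s))) s := fun s =>
    hasDerivAt_comp_of_hasFDerivAt_innerSL (hf s) (hx s)
  have hinner : Integrable fun s => inner ℝ (x' s) (gradf (x s)) :=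
    integrable_inner_of_integrable_norm_sq_add_norm_sq
      (stronglyMeasurable_of_hasDerivAt hderiv).aestronglyMeasurable henergy
  have hcross : ∫ s, inner ℝ (x' s) (gradf (x s)) = b - a :=
    integral_of_hasDerivAt_of_tendsto hderiv hinner ha hb
  constructor
  · rw [integral_norm_add_sq henergy hinner, hcross, RCLike.re_to_real]
    ring
  · rw [integral_norm_sub_sq henergy hinner, hcross, RCLike.re_to_real]
    ring

/-- **Bogomol'nyi identity.** For a real Hilbert space `E`, a differentiable
function `f : E → ℝ` with gradient `gradf`, and a differentiable curve
`x : ℝ → E` with derivative `x'` converging to `cm` at `-∞` and to `cp` at `+∞`,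
such that `‖x'‖²` and `‖∇f(x)‖²` are integrable, the energy
`(1/2)∫ (‖x'‖² + ‖∇f(x)‖²)` equals
`(1/2)∫ ‖x' + ∇f(x)‖² + f(cm) - f(cp)` and also
`(1/2)∫ ‖x' - ∇f(x)‖² + f(cp) - f(cm)`. -/
theorem bogomolnyi_identity {E : Type*} [NormedAddCommGroup E] [InnerProductSpace ℝ E]
    [CompleteSpace E]
    (f : E → ℝ) (gradf : E → E) (hf : ∀ p, HasGradientAt f (gradf p) p)
    (x : ℝ → E) (x' : ℝ → E) (hx : ∀ s, HasDerivAt x (x' s) s)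
    (cm cp : E)
    (hcm : Tendsto x atBot (nhds cm)) (hcp : Tendsto x atTop (nhds cp))
    (hint1 : Integrable fun s => ‖x' s‖ ^ 2)
    (hint2 : Integrable fun s => ‖gradf (x s)‖ ^ 2) :
    ((1 / 2 : ℝ) * ∫ s, (‖x' s‖ ^ 2 + ‖gradf (x s)‖ ^ 2) =
      (1 / 2 : ℝ) * (∫ s, ‖x' s + gradf (x s)‖ ^ 2) + (f cm - f cp)) ∧
    ((1 / 2 : ℝ) * ∫ s, (‖x' s‖ ^ 2 + ‖gradf (x s)‖ ^ 2) =
      (1 / 2 : ℝ) * (∫ s, ‖x' s - gradf (x s)‖ ^ 2) + (f cp - f cm)) := by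
  exact bogomolnyi_identity_general (fun s => (hf (x s)).hasFDerivAt) hx
    ((hf cm).continuousAt.tendsto.comp hcm) ((hf cp).continuousAt.tendsto.comp hcp)
    (hint1.add hint2)
end

section
/- Let E be a real Hilbert space, f : E → ℝ a differentiable function with gradient ∇f, and x : ℝ → E a differentiable curve such that x(s) → c₋ as s → −∞ and x(s) → c₊ as s → +∞, and such that s ↦ ‖x'(s)‖² and s ↦ ‖∇f(x(s))‖² are integrable on ℝ. Then the energy satisfies E(x) = (1/2)∫_ℝ (‖x'(s)‖² + ‖∇f(x(s))‖²) ds ≥ |f(c₊) − f(c₋)|; moreover, if x is a downward gradient flow line, i.e. x'(s) = −∇f(x(s)) for every s ∈ ℝ, then E(x) = f(c₋) − f(c₊). -/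
open MeasureTheory Filter

/-!
Along the curve, `(f ∘ x)' = ⟪∇f(x), x'⟫`, and by Cauchy–Schwarz and AM-GM this is at most half the
energy density in absolute value; integrating over `ℝ` gives the lower bound. On a downward gradient
flow line the pointwise bound is an equality, and `f ∘ x` is antitone with finite limits, which
already forces its derivative `-‖∇f(x)‖²` to be integrable.
-/

open scoped Topology

lemma integrable_of_hasDerivAt_of_nonneg {g g' : ℝ → ℝ} {a b : ℝ}
    (hg : ∀ s, HasDerivAt g (g' s) s) (hg' : ∀ s, 0 ≤ g' s)
    (ha : Tendsto g atBot (𝓝 a)) (hb : Tendsto g atTop (𝓝 b)) : Integrable g' := by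
  have hcont : Continuous g := continuous_iff_continuousAt.2 fun s => (hg s).continuousAt
  have hint (r : ℝ) : IntegrableOn g' (Set.Ioc (-r) r) :=
    intervalIntegral.integrableOn_deriv_of_nonneg hcont.continuousOn (fun s _ => hg s)
      fun s _ => hg' s
  have hftc : ∀ᶠ r in atTop, g r - g (-r) = ∫ s in (-r)..r, ‖g' s‖ := by
    filter_upwards [eventually_ge_atTop 0] with r hr
    simp_rw [Real.norm_of_nonneg (hg' _)]
    exact (intervalIntegral.integral_eq_sub_of_hasDerivAt (fun s _ => hg s)
      ((intervalIntegrable_iff_integrableOn_Ioc_of_le (neg_le_self hr)).2 (hint r))).symm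
  exact integrable_of_intervalIntegral_norm_tendsto (b - a) hint tendsto_neg_atTop_atBot tendsto_id
    ((hb.sub (ha.comp tendsto_neg_atTop_atBot)).congr' hftc)

lemma integral_of_hasDerivAt_of_nonneg {g g' : ℝ → ℝ} {a b : ℝ}
    (hg : ∀ s, HasDerivAt g (g' s) s) (hg' : ∀ s, 0 ≤ g' s)
    (ha : Tendsto g atBot (𝓝 a)) (hb : Tendsto g atTop (𝓝 b)) : ∫ s, g' s = b - a :=
  integral_of_hasDerivAt_of_tendsto hg (integrable_of_hasDerivAt_of_nonneg hg hg' ha hb) ha hb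

lemma norm_sub_le_integral_of_norm_hasDerivAt_le {F : Type*} [NormedAddCommGroup F]
    [NormedSpace ℝ F] [CompleteSpace F] {g g' : ℝ → F} {B : ℝ → ℝ} {a b : F}
    (hg : ∀ s, HasDerivAt g (g' s) s) (hB : Integrable B) (hg' : ∀ s, ‖g' s‖ ≤ B s)
    (ha : Tendsto g atBot (𝓝 a)) (hb : Tendsto g atTop (𝓝 b)) : ‖b - a‖ ≤ ∫ s, B s := by
  have hmeas : AEStronglyMeasurable g' :=
    deriv_eq hg ▸ aestronglyMeasurable_deriv g volume
  have hint : Integrable g' := hB.mono' hmeas (.of_forall hg')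
  rw [← integral_of_hasDerivAt_of_tendsto hg hint ha hb]
  exact norm_integral_le_of_norm_le hB (.of_forall hg')

section Gradient

variable {𝕜 E : Type*} [RCLike 𝕜]

lemma norm_inner_le_half_add_norm_sq [SeminormedAddCommGroup E] [InnerProductSpace 𝕜 E] (u v : E) :
    ‖inner 𝕜 u v‖ ≤ 1 / 2 * (‖u‖ ^ 2 + ‖v‖ ^ 2) :=
  calc ‖inner 𝕜 u v‖ ≤ ‖u‖ * ‖v‖ := norm_inner_le_norm u v
    _ = 1 / 2 * (2 * ‖u‖ * ‖v‖) := by ring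
    _ ≤ 1 / 2 * (‖u‖ ^ 2 + ‖v‖ ^ 2) := by gcongr; exact two_mul_le_add_sq _ _

variable [NormedAddCommGroup E] [InnerProductSpace 𝕜 E] [CompleteSpace E]

lemma hasDerivAt_comp_of_hasGradientAt {f : E → 𝕜} {x : 𝕜 → E} {v x' : E} {s : 𝕜}
    (hf : HasGradientAt f v (x s)) (hx : HasDerivAt x x' s) :
    HasDerivAt (f ∘ x) (inner 𝕜 v x') s := by
  simpa only [InnerProductSpace.toDual_apply_apply] using hf.hasFDerivAt.comp_hasDerivAt s hx

end Gradient

section Energy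

variable {E : Type*} [NormedAddCommGroup E] [InnerProductSpace ℝ E] [CompleteSpace E]
  {f : E → ℝ} {gradf : E → E} {x x' : ℝ → E} {a b : ℝ}

lemma abs_sub_le_half_integral_energy (hf : ∀ s, HasGradientAt f (gradf (x s)) (x s))
    (hx : ∀ s, HasDerivAt x (x' s) s)
    (ha : Tendsto (f ∘ x) atBot (𝓝 a)) (hb : Tendsto (f ∘ x) atTop (𝓝 b))
    (hint : Integrable fun s => ‖x' s‖ ^ 2 + ‖gradf (x s)‖ ^ 2) :
    |b - a| ≤ 1 / 2 * ∫ s, (‖x' s‖ ^ 2 + ‖gradf (x s)‖ ^ 2) := by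
  rw [← integral_const_mul, ← Real.norm_eq_abs]
  refine norm_sub_le_integral_of_norm_hasDerivAt_le
    (fun s => hasDerivAt_comp_of_hasGradientAt (hf s) (hx s)) (hint.const_mul _) (fun s => ?_) ha hb
  rw [norm_inner_symm]
  exact norm_inner_le_half_add_norm_sq _ _

lemma integral_norm_sq_gradient_of_flow (hf : ∀ s, HasGradientAt f (gradf (x s)) (x s))
    (hx : ∀ s, HasDerivAt x (-gradf (x s)) s)
    (ha : Tendsto (f ∘ x) atBot (𝓝 a)) (hb : Tendsto (f ∘ x) atTop (𝓝 b)) :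
    ∫ s, ‖gradf (x s)‖ ^ 2 = a - b := by
  have hderiv (s : ℝ) : HasDerivAt (-(f ∘ x)) (‖gradf (x s)‖ ^ 2) s := by
    simpa only [inner_neg_right, neg_neg, real_inner_self_eq_norm_sq] using
      (hasDerivAt_comp_of_hasGradientAt (hf s) (hx s)).neg
  rw [integral_of_hasDerivAt_of_nonneg hderiv (fun _ => sq_nonneg _) ha.neg hb.neg, neg_sub_neg]

end Energy

theorem energy_ge_action_difference_general {E : Type*} [NormedAddCommGroup E]
    [InnerProductSpace ℝ E] [CompleteSpace E]
    {f : E → ℝ} {gradf : E → E} {x x' : ℝ → E} {a b : ℝ}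
    (hf : ∀ s, HasGradientAt f (gradf (x s)) (x s)) (hx : ∀ s, HasDerivAt x (x' s) s)
    (ha : Tendsto (f ∘ x) atBot (𝓝 a)) (hb : Tendsto (f ∘ x) atTop (𝓝 b)) :
    ((Integrable fun s => ‖x' s‖ ^ 2 + ‖gradf (x s)‖ ^ 2) →
      1 / 2 * ∫ s, (‖x' s‖ ^ 2 + ‖gradf (x s)‖ ^ 2) ≥ |b - a|) ∧
    ((∀ s, x' s = -gradf (x s)) →
      1 / 2 * ∫ s, (‖x' s‖ ^ 2 + ‖gradf (x s)‖ ^ 2) = a - b) := by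
  refine ⟨abs_sub_le_half_integral_energy hf hx ha hb, fun hflow => ?_⟩
  calc 1 / 2 * ∫ s, (‖x' s‖ ^ 2 + ‖gradf (x s)‖ ^ 2)
    _ = 1 / 2 * ∫ s, 2 * ‖gradf (x s)‖ ^ 2 := by simp only [hflow, norm_neg, ← two_mul]
    _ = ∫ s, ‖gradf (x s)‖ ^ 2 := by rw [integral_const_mul]; ring
    _ = a - b := integral_norm_sq_gradient_of_flow hf (fun s => hflow s ▸ hx s) ha hb

/-- **Energy bound and energy of gradient flow lines.** For a real Hilbert space `E`,
a differentiable `f : E → ℝ` with gradient `gradf`, and a differentiable curve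
`x : ℝ → E` with derivative `x'`, converging to `cm` at `-∞` and `cp` at `+∞`,
with `‖x'‖²` and `‖∇f(x)‖²` integrable, the energy
`E(x) = (1/2)∫ (‖x'‖² + ‖∇f(x)‖²)` satisfies `E(x) ≥ |f(cp) − f(cm)|`; moreover if
`x' = −∇f(x)` everywhere (downward gradient flow line) then `E(x) = f(cm) − f(cp)`. -/
theorem energy_ge_action_difference {E : Type*} [NormedAddCommGroup E] [InnerProductSpace ℝ E]
    [CompleteSpace E]
    (f : E → ℝ) (gradf : E → E) (hf : ∀ p, HasGradientAt f (gradf p) p)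
    (x : ℝ → E) (x' : ℝ → E) (hx : ∀ s, HasDerivAt x (x' s) s)
    (cm cp : E)
    (hcm : Tendsto x atBot (nhds cm)) (hcp : Tendsto x atTop (nhds cp))
    (hint1 : Integrable fun s => ‖x' s‖ ^ 2)
    (hint2 : Integrable fun s => ‖gradf (x s)‖ ^ 2) :
    ((1 / 2 : ℝ) * ∫ s, (‖x' s‖ ^ 2 + ‖gradf (x s)‖ ^ 2) ≥ |f cp - f cm|) ∧
    ((∀ s, x' s = -gradf (x s)) →
      (1 / 2 : ℝ) * ∫ s, (‖x' s‖ ^ 2 + ‖gradf (x s)‖ ^ 2) = f cm - f cp) :=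
  (energy_ge_action_difference_general (fun s => hf (x s)) hx
    ((hf cm).continuousAt.tendsto.comp hcm) ((hf cp).continuousAt.tendsto.comp hcp)).imp_left
    fun h => h (hint1.add hint2)
end
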